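/- arXiv:2007.11300 — 2 statements merged into one kernel-verified Lean document; each statement's English description precedes it below -/
import Mathlib

section
/- Let 0 < γ < 1 and ν ≥ 3/2. Then for all x > 0, ∫_0^x e^{−γt} t^ν I_ν(t) dt > (1/(1−γ)) · ( 1 − 4ν² / ((2ν−1)(1−γ)x) ) · e^{−γx} x^ν I_ν(x). -/
open Real MeasureTheory

/-- Modified Bessel function of the first kind, `I_ν(x) = ∑_{k} (x/2)^{ν+2k} / (Γ(ν+k+1) k!)`. -/
noncomputable def besselI (ν x : ℝ) : ℝ :=
  ∑' k : ℕ, (x / 2) ^ (ν + 2 * (k : ℝ)) / (Real.Gamma (ν + (k : ℝ) + 1) * (Nat.factorial k : ℝ))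

/-- Modified Bessel function of the second kind, `K_ν(x) = ∫_0^∞ e^{-x cosh t} cosh(ν t) dt`. -/
noncomputable def besselK (ν x : ℝ) : ℝ :=
  ∫ t in Set.Ioi (0 : ℝ), Real.exp (-x * Real.cosh t) * Real.cosh (ν * t)

/-- Lower incomplete gamma function `γ(a, x) = ∫_0^x t^{a-1} e^{-t} dt`. -/
noncomputable def lowerIncGamma (a x : ℝ) : ℝ :=
  ∫ t in (0 : ℝ)..x, t ^ (a - 1) * Real.exp (-t)

/-- coefficients of the reduced series -/
noncomputable def bCoef (ν : ℝ) (k : ℕ) : ℝ :=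
  1 / (Real.Gamma (ν + (k : ℝ) + 1) * (Nat.factorial k : ℝ))

/-- reduced series -/
noncomputable def gSer (ν y : ℝ) : ℝ := ∑' k : ℕ, bCoef ν k * y ^ k

/-- its derivative -/
noncomputable def hSer (ν y : ℝ) : ℝ := ∑' k : ℕ, ((k : ℝ) + 1) * bCoef ν (k + 1) * y ^ k

lemma bCoef_pos {ν : ℝ} (hν : 3/2 ≤ ν) (k : ℕ) : 0 < bCoef ν k := by
  unfold bCoef
  have : 0 < Real.Gamma (ν + (k : ℝ) + 1) := Real.Gamma_pos_of_pos (by positivity)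
  positivity

lemma bCoef_succ {ν : ℝ} (hν : 3/2 ≤ ν) (k : ℕ) :
    bCoef ν k = (ν + k + 1) * (k + 1) * bCoef ν (k + 1) := by
  unfold bCoef
  have h0 : (0:ℝ) < ν + k + 1 := by positivity
  have h1 : 0 < Real.Gamma (ν + (k : ℝ) + 1) := Real.Gamma_pos_of_pos h0
  have h2 : Real.Gamma (ν + ((k + 1 : ℕ) : ℝ) + 1) = (ν + k + 1) * Real.Gamma (ν + k + 1) := by
    rw [← Real.Gamma_add_one h0.ne']; push_cast; congr 1; ring
  rw [h2, Nat.factorial_succ]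
  push_cast
  have h3 : (0:ℝ) < Nat.factorial k := by positivity
  field_simp

lemma bCoef_le {ν : ℝ} (hν : 3/2 ≤ ν) (k : ℕ) :
    bCoef ν k ≤ bCoef ν 0 * ((Nat.factorial k : ℝ))⁻¹ := by
  induction k with
  | zero => simp
  | succ k ih =>
    have h := bCoef_succ hν k
    have hp := bCoef_pos hν (k + 1)
    rw [Nat.factorial_succ]
    push_cast
    have h4 : (0:ℝ) < k + 1 := by positivity
    rw [mul_inv, mul_left_comm, ← div_eq_inv_mul, le_div_iff₀ h4]
    refine le_trans ?_ ih
    rw [h]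
    have : (0:ℝ) ≤ (ν + k) * ((k + 1) * bCoef ν (k + 1)) := by positivity
    nlinarith

lemma summable_g {ν : ℝ} (hν : 3/2 ≤ ν) (y : ℝ) : Summable fun k : ℕ => bCoef ν k * y ^ k := by
  refine Summable.of_norm_bounded
    (g := fun k : ℕ => bCoef ν 0 * (|y| ^ k / (Nat.factorial k : ℝ))) ?_ ?_
  · exact (Real.summable_pow_div_factorial _).mul_left _
  · intro k
    rw [norm_mul, norm_pow, Real.norm_eq_abs, abs_of_pos (bCoef_pos hν k), Real.norm_eq_abs]
    have := mul_le_mul_of_nonneg_right (bCoef_le hν k) (pow_nonneg (abs_nonneg y) k)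
    refine this.trans (le_of_eq ?_)
    rw [div_eq_mul_inv]; ring

lemma summable_h {ν : ℝ} (hν : 3/2 ≤ ν) (y : ℝ) :
    Summable fun k : ℕ => ((k : ℝ) + 1) * bCoef ν (k + 1) * y ^ k := by
  refine Summable.of_norm_bounded (summable_g hν |y|) ?_
  intro k
  have hp := bCoef_pos hν (k + 1)
  have h0 : (0:ℝ) ≤ ((k : ℝ) + 1) * bCoef ν (k + 1) := by positivity
  rw [norm_mul, norm_pow, Real.norm_eq_abs, abs_of_nonneg h0, Real.norm_eq_abs]
  refine mul_le_mul_of_nonneg_right ?_ (by positivity)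
  rw [bCoef_succ hν k]
  have : (0:ℝ) ≤ (ν + k) * ((k + 1) * bCoef ν (k + 1)) := by positivity
  nlinarith

lemma hasDerivAt_g {ν : ℝ} (hν : 3/2 ≤ ν) (y : ℝ) : HasDerivAt (gSer ν) (hSer ν y) y := by
  have key : HasDerivAt (fun z => ∑' k : ℕ, bCoef ν k * z ^ k)
      (∑' k : ℕ, bCoef ν k * ((k : ℝ) * y ^ (k - 1))) y := by
    have hR : |y| < |y| + 1 := by linarith
    have hu : Summable fun k : ℕ => bCoef ν k * ((k : ℝ) * (|y| + 1) ^ (k - 1)) := by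
      rw [← summable_nat_add_iff 1]
      refine (summable_h hν (|y| + 1)).congr ?_
      intro k
      simp only [Nat.cast_add, Nat.cast_one, Nat.add_sub_cancel]
      ring
    have hd : ∀ (k : ℕ) (z : ℝ), z ∈ Metric.ball (0:ℝ) (|y| + 1) →
        HasDerivAt (fun z : ℝ => bCoef ν k * z ^ k) (bCoef ν k * ((k : ℝ) * z ^ (k - 1))) z := by
      intro k z _
      exact (hasDerivAt_pow k z).const_mul _
    have hb : ∀ (k : ℕ) (z : ℝ), z ∈ Metric.ball (0:ℝ) (|y| + 1) →
        ‖bCoef ν k * ((k : ℝ) * z ^ (k - 1))‖ ≤ bCoef ν k * ((k : ℝ) * (|y| + 1) ^ (k - 1)) := by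
      intro k z hz
      rw [norm_mul, norm_mul, norm_pow, Real.norm_eq_abs, abs_of_pos (bCoef_pos hν k)]
      have hz' : ‖z‖ ≤ |y| + 1 := by
        have := mem_ball_zero_iff.mp hz; linarith
      have := (bCoef_pos hν k).le
      simp only [Real.norm_natCast]
      gcongr
    have hy : y ∈ Metric.ball (0:ℝ) (|y| + 1) := by
      rw [mem_ball_zero_iff, Real.norm_eq_abs]; exact hR
    exact hasDerivAt_tsum_of_isPreconnected hu Metric.isOpen_ball
      (convex_ball _ _).isPreconnected hd hb hy (summable_g hν y) hy
  have e : (∑' k : ℕ, bCoef ν k * ((k : ℝ) * y ^ (k - 1))) = hSer ν y := by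
    rw [Summable.tsum_eq_zero_add]
    · unfold hSer
      simp only [Nat.cast_zero, zero_mul, mul_zero, zero_add]
      refine tsum_congr fun k => ?_
      simp; ring
    · rw [← summable_nat_add_iff 1]
      refine (summable_h hν y).congr ?_
      intro k
      simp; ring
  rw [e] at key
  exact key

lemma g_pos {ν : ℝ} (hν : 3/2 ≤ ν) {y : ℝ} (hy : 0 ≤ y) : 0 < gSer ν y := by
  refine (summable_g hν y).tsum_pos (fun k => ?_) 0 ?_
  · have := bCoef_pos hν k
    positivity
  · simpa using bCoef_pos hν 0

/-- `I_{ν+1} ≤ I_ν` in reduced form. -/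
lemma h_le_g {ν : ℝ} (hν : 3/2 ≤ ν) (s : ℝ) :
    s * hSer ν (s ^ 2) ≤ gSer ν (s ^ 2) := by
  have hg := summable_g hν (s ^ 2)
  have hg1 := (summable_nat_add_iff 1).mpr hg
  have h1 : s * hSer ν (s ^ 2) ≤
      ∑' k : ℕ, (1/2 * (bCoef ν k * (s ^ 2) ^ k) +
        1/2 * (bCoef ν (k + 1) * (s ^ 2) ^ (k + 1))) := by
    unfold hSer
    rw [← tsum_mul_left]
    refine Summable.tsum_le_tsum (fun k => ?_) ((summable_h hν _).mul_left s)
      ((hg.mul_left _).add (hg1.mul_left _))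
    rw [bCoef_succ hν k]
    have hp := bCoef_pos hν (k + 1)
    have hq : 0 ≤ (s ^ 2) ^ k := by positivity
    have : ((k:ℝ) + 1) * s ≤ 1/2 * ((ν + k + 1) * (k + 1)) + 1/2 * s ^ 2 := by
      nlinarith [sq_nonneg (s - (k + 1)), (by positivity : (0:ℝ) ≤ ν * (k + 1))]
    have := mul_le_mul_of_nonneg_left this (mul_nonneg hp.le hq)
    rw [pow_succ (s ^ 2) k]
    linarith
  refine h1.trans ?_
  rw [((hg.mul_left _)).tsum_add (hg1.mul_left _), tsum_mul_left, tsum_mul_left]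
  have h2 := hg.tsum_eq_zero_add
  have h3 : 0 < bCoef ν 0 * (s ^ 2) ^ 0 := by simpa using bCoef_pos hν 0
  unfold gSer
  linarith

lemma besselI_eq (ν : ℝ) {t : ℝ} (ht : 0 < t) :
    besselI ν t = (t / 2) ^ ν * gSer ν ((t / 2) ^ 2) := by
  unfold besselI gSer bCoef
  rw [← tsum_mul_left]
  refine tsum_congr fun k => ?_
  have : (t / 2) ^ (ν + 2 * (k : ℝ)) = (t / 2) ^ ν * ((t / 2) ^ 2) ^ k := by
    rw [Real.rpow_add (by positivity), ← pow_mul, ← Real.rpow_natCast (t / 2) (2 * k)]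
    push_cast; rfl
  rw [this]; ring

/-- the integrand -/
noncomputable def fInt (γ ν t : ℝ) : ℝ :=
  Real.exp (-γ * t) * t ^ ν * ((t / 2) ^ ν * gSer ν ((t / 2) ^ 2))

lemma fInt_cont {γ ν : ℝ} (hν : 3/2 ≤ ν) : Continuous (fInt γ ν) := by
  have hg : Continuous (gSer ν) :=
    continuous_iff_continuousAt.mpr fun y => (hasDerivAt_g hν y).continuousAt
  have hr : Continuous fun t : ℝ => t ^ ν := Real.continuous_rpow_const (by linarith)
  have h2 : Continuous fun t : ℝ => (t / 2) ^ ν := hr.comp (continuous_id.div_const 2)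
  unfold fInt
  have h3 : Continuous fun t : ℝ => gSer ν ((t / 2) ^ 2) := hg.comp (by fun_prop)
  fun_prop

lemma fInt_pos {γ ν : ℝ} (hν : 3/2 ≤ ν) {t : ℝ} (ht : 0 < t) : 0 < fInt γ ν t := by
  have := g_pos hν (y := (t / 2) ^ 2) (by positivity)
  unfold fInt
  positivity

lemma fInt_deriv {γ ν : ℝ} (hν : 3/2 ≤ ν) {t : ℝ} (ht : 0 < t) :
    ∃ d, HasDerivAt (fInt γ ν) d t ∧ d ≤ (1 - γ + 2 * ν / t) * fInt γ ν t := by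
  have he : HasDerivAt (fun t : ℝ => Real.exp (-γ * t)) (Real.exp (-γ * t) * (-γ * 1)) t :=
    ((hasDerivAt_id t).const_mul (-γ)).exp
  have hr : HasDerivAt (fun t : ℝ => t ^ ν) (ν * t ^ (ν - 1)) t :=
    Real.hasDerivAt_rpow_const (Or.inl ht.ne')
  have hh : HasDerivAt (fun t : ℝ => t / 2) (1 / 2) t := (hasDerivAt_id t).div_const 2
  have hr2 : HasDerivAt (fun t : ℝ => (t / 2) ^ ν) ((1 / 2) * ν * (t / 2) ^ (ν - 1)) t :=
    hh.rpow_const (Or.inl (by positivity))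
  have hsq : HasDerivAt (fun t : ℝ => (t / 2) ^ 2) (t / 2) t := by
    have := hh.pow 2
    refine this.congr_deriv ?_
    norm_num
    ring
  have hg : HasDerivAt (fun t : ℝ => gSer ν ((t / 2) ^ 2)) (hSer ν ((t / 2) ^ 2) * (t / 2)) t :=
    HasDerivAt.comp (h₂ := gSer ν) t (hasDerivAt_g hν ((t / 2) ^ 2)) hsq
  refine ⟨_, (he.mul hr).mul (hr2.mul hg), ?_⟩
  have e1 : t ^ (ν - 1) = t ^ ν / t := Real.rpow_sub_one ht.ne' ν
  have e2 : (t / 2) ^ (ν - 1) = (t / 2) ^ ν / (t / 2) :=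
    Real.rpow_sub_one (by positivity) ν
  have key := h_le_g hν (t / 2)
  simp only [Pi.mul_apply]
  rw [e1, e2]
  unfold fInt
  have hP : 0 ≤ Real.exp (-γ * t) * t ^ ν * (t / 2) ^ ν := by positivity
  have k2 := mul_le_mul_of_nonneg_left key hP
  generalize hSer ν ((t / 2) ^ 2) = H at *
  generalize gSer ν ((t / 2) ^ 2) = G at *
  generalize (t / 2) ^ ν = A at *
  generalize t ^ ν = B at *
  generalize Real.exp (-γ * t) = E at *
  have : (1 - γ + 2 * ν / t) * (E * B * (A * G)) -
      ((E * (-γ * 1) * B + E * (ν * (B / t))) * (A * G) +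
        E * B * (1 / 2 * ν * (A / (t / 2)) * G + A * (H * (t / 2)))) =
      E * B * A * G - E * B * A * (t / 2 * H) := by
    field_simp
    ring
  linarith

theorem stmt_2 (γ ν : ℝ) (hγ0 : 0 < γ) (hγ1 : γ < 1) (hν : 3/2 ≤ ν) (x : ℝ) (hx : 0 < x) :
    ∫ t in (0 : ℝ)..x, Real.exp (-γ * t) * t ^ ν * besselI ν t >
      (1 / (1 - γ)) * (1 - 4 * ν ^ 2 / ((2 * ν - 1) * (1 - γ) * x)) *
        (Real.exp (-γ * x) * x ^ ν * besselI ν x) := by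
  have hI : ∫ t in (0 : ℝ)..x, Real.exp (-γ * t) * t ^ ν * besselI ν t =
      ∫ t in (0 : ℝ)..x, fInt γ ν t := by
    rw [intervalIntegral.integral_of_le hx.le, intervalIntegral.integral_of_le hx.le]
    refine setIntegral_congr_fun measurableSet_Ioc fun t ht => ?_
    simp only [fInt]
    rw [besselI_eq ν ht.1]
  rw [hI, besselI_eq ν hx]
  change (∫ t in (0 : ℝ)..x, fInt γ ν t) > _ * fInt γ ν x
  have hcont := fInt_cont (γ := γ) hν
  have hJpos : ∀ y : ℝ, 0 < y → 0 < ∫ t in (0 : ℝ)..y, fInt γ ν t := fun y hy =>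
    intervalIntegral.intervalIntegral_pos_of_pos_on (hcont.intervalIntegrable _ _)
      (fun t ht => fInt_pos hν ht.1) hy
  have hg : 0 < 1 - γ := by linarith
  have hn : 0 < 2 * ν - 1 := by linarith
  have hν0 : 0 < ν := by linarith
  obtain ⟨c, hc⟩ : ∃ c, c = 4 * ν ^ 2 / ((2 * ν - 1) * (1 - γ)) := ⟨_, rfl⟩
  have hc0 : 0 < c := by rw [hc]; positivity
  have hc1 : 2 * ν ≤ c * (1 - γ) := by
    have : c * (1 - γ) = 4 * ν ^ 2 / (2 * ν - 1) := by rw [hc]; field_simp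
    rw [this, le_div_iff₀ hn]
    nlinarith
  have hcx : 4 * ν ^ 2 / ((2 * ν - 1) * (1 - γ) * x) = c / x := by rw [hc, div_div]
  rw [hcx]
  suffices h : (1 - c / x) * fInt γ ν x < (1 - γ) * ∫ t in (0 : ℝ)..x, fInt γ ν t by
    rw [gt_iff_lt, mul_assoc, one_div, inv_mul_lt_iff₀ hg]
    exact h
  have hfx := fInt_pos (γ := γ) hν hx
  rcases le_total x c with hxc | hxc
  · have h1 : 1 - c / x ≤ 0 := by
      have : 1 ≤ c / x := by rw [le_div_iff₀ hx]; linarith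
      linarith
    have h2 := mul_pos hg (hJpos x hx)
    nlinarith
  · have hder : ∀ t : ℝ, 0 < t → ∃ D, HasDerivAt
        (fun t => (1 - γ) * (∫ z in (0 : ℝ)..t, fInt γ ν z) - (1 - c / t) * fInt γ ν t) D t ∧
        (c ≤ t → 0 ≤ D) := by
      intro t ht
      obtain ⟨d, hd, hdle⟩ := fInt_deriv (γ := γ) hν ht
      have hJ : HasDerivAt (fun t => ∫ z in (0 : ℝ)..t, fInt γ ν z) (fInt γ ν t) t :=
        intervalIntegral.integral_hasDerivAt_right (hcont.intervalIntegrable _ _)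
          (hcont.stronglyMeasurableAtFilter _ _) hcont.continuousAt
      have hq : HasDerivAt (fun t : ℝ => 1 - c / t) (c / t ^ 2) t := by
        have := ((hasDerivAt_inv ht.ne').const_mul c).const_sub 1
        simp only [← div_eq_mul_inv] at this
        refine this.congr_deriv ?_
        ring
      refine ⟨_, (hJ.const_mul (1 - γ)).sub (hq.mul hd), fun hct => ?_⟩
      have hft := fInt_pos (γ := γ) hν ht
      have h1 : 0 ≤ 1 - c / t := by
        have : c / t ≤ 1 := by rw [div_le_iff₀ ht]; linarith
        linarith
      have h2 := mul_le_mul_of_nonneg_left hdle h1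
      have h3 : 0 ≤ (1 - γ) - c / t ^ 2 - (1 - c / t) * (1 - γ + 2 * ν / t) := by
        have : (1 - γ) - c / t ^ 2 - (1 - c / t) * (1 - γ + 2 * ν / t) =
            (c * (1 - γ) - 2 * ν) / t + (2 * ν - 1) * c / t ^ 2 := by
          field_simp
          ring
        rw [this]
        have := sub_nonneg.mpr hc1
        positivity
      have h4 := mul_nonneg h3 hft.le
      linarith
    choose! D hD hD0 using hder
    have hmono : MonotoneOn
        (fun t => (1 - γ) * (∫ z in (0 : ℝ)..t, fInt γ ν z) - (1 - c / t) * fInt γ ν t)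
        (Set.Icc c x) := by
      refine monotoneOn_of_hasDerivWithinAt_nonneg (f' := D) (convex_Icc c x) ?_ ?_ ?_
      · intro t ht
        exact (hD t (hc0.trans_le ht.1)).continuousAt.continuousWithinAt
      · intro t ht
        rw [interior_Icc] at ht
        exact (hD t (hc0.trans ht.1)).hasDerivWithinAt
      · intro t ht
        rw [interior_Icc] at ht
        exact hD0 t (hc0.trans ht.1) ht.1.le
    have hle := hmono (Set.left_mem_Icc.mpr hxc) (Set.right_mem_Icc.mpr hxc) hxc
    simp only [div_self hc0.ne', sub_self, zero_mul, sub_zero] at hle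
    have := mul_pos hg (hJpos c hc0)
    linarith
end

section
/- Let −1 < β < 0 and ν ≥ 1/2. Then for all x > 0, ( e^{−βx} K_{ν+2}(x) / x^{ν−1} ) · ∫_0^x e^{βt} t^ν I_ν(t) dt < 2(ν+1) / ((2ν+1)(1+β)). -/
open Real MeasureTheory

open Set Filter Topology

/-- Coefficients of the entire function `P`. -/
noncomputable def bA (μ : ℝ) (k : ℕ) : ℝ := 1 / (Real.Gamma (μ + (k : ℝ) + 1) * (Nat.factorial k : ℝ))

/-- The entire function with `I_μ(x) = (x/2)^μ P_μ(x²/4)`. -/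
noncomputable def bP (μ z : ℝ) : ℝ := ∑' k : ℕ, bA μ k * z ^ k

/-- The normalised Bessel function `p_μ(x) = P_μ(x²/4)`. -/
noncomputable def bp (μ x : ℝ) : ℝ := bP μ (x ^ 2 / 4)

lemma bA_pos {μ : ℝ} (hμ : 0 ≤ μ) (k : ℕ) : 0 < bA μ k := by
  unfold bA
  have : 0 < Real.Gamma (μ + (k : ℝ) + 1) := Real.Gamma_pos_of_pos (by positivity)
  positivity

lemma gamma_mono_nat {μ : ℝ} (hμ : 0 ≤ μ) (k : ℕ) :
    Real.Gamma (μ + 1) ≤ Real.Gamma (μ + (k : ℝ) + 1) := by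
  induction k with
  | zero => simp
  | succ n ih =>
    refine ih.trans ?_
    have h1 : 0 < Real.Gamma (μ + (n : ℝ) + 1) := Real.Gamma_pos_of_pos (by positivity)
    have h2 : Real.Gamma (μ + ((n + 1 : ℕ) : ℝ) + 1)
        = (μ + (n : ℝ) + 1) * Real.Gamma (μ + (n : ℝ) + 1) := by
      rw [← Real.Gamma_add_one (by positivity)]
      congr 1
      push_cast
      ring
    rw [h2]
    have h3 : (0 : ℝ) ≤ (n : ℝ) := Nat.cast_nonneg n
    nlinarith

lemma bA_le {μ : ℝ} (hμ : 0 ≤ μ) (k : ℕ) :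
    bA μ k ≤ (1 / Real.Gamma (μ + 1)) * (1 / (Nat.factorial k : ℝ)) := by
  unfold bA
  have h0 : 0 < Real.Gamma (μ + 1) := Real.Gamma_pos_of_pos (by positivity)
  have := gamma_mono_nat hμ k
  rw [← one_div_mul_one_div]
  gcongr

lemma bA_summable {μ : ℝ} (hμ : 0 ≤ μ) (z : ℝ) : Summable fun k => bA μ k * z ^ k := by
  refine Summable.of_norm_bounded
    (g := fun k : ℕ => (1 / Real.Gamma (μ + 1)) * (|z| ^ k / (Nat.factorial k : ℝ))) ?_ ?_
  · exact (Real.summable_pow_div_factorial |z|).mul_left _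
  · intro k
    rw [norm_mul, norm_pow, Real.norm_eq_abs, Real.norm_eq_abs, abs_of_pos (bA_pos hμ k)]
    calc bA μ k * |z| ^ k ≤ (1 / Real.Gamma (μ + 1)) * (1 / (Nat.factorial k : ℝ)) * |z| ^ k := by
          gcongr
          exact bA_le hμ k
      _ = _ := by ring

lemma bA_succ (μ : ℝ) (k : ℕ) : bA μ (k + 1) * ((k : ℝ) + 1) = bA (μ + 1) k := by
  unfold bA
  have : (Nat.factorial (k+1) : ℝ) = ((k : ℝ) + 1) * (Nat.factorial k : ℝ) := by
    rw [Nat.factorial_succ]; push_cast; ring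
  have e : μ + ((k + 1 : ℕ) : ℝ) + 1 = μ + 1 + (k : ℝ) + 1 := by push_cast; ring
  rw [this, e]
  have h1 : (k : ℝ) + 1 ≠ 0 := by positivity
  rw [show Real.Gamma (μ + 1 + ↑k + 1) * (((k : ℝ) + 1) * (Nat.factorial k : ℝ)) = (Real.Gamma (μ + 1 + ↑k + 1) * (Nat.factorial k : ℝ)) * ((k : ℝ) + 1) by ring, ← one_div_mul_one_div, mul_assoc, one_div_mul_cancel h1, mul_one]

lemma bP_pos {μ : ℝ} (hμ : 0 ≤ μ) {z : ℝ} (hz : 0 ≤ z) : 0 < bP μ z := by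
  unfold bP
  refine (bA_summable hμ z).tsum_pos (fun k => ?_) 0 ?_
  · have := bA_pos hμ k
    positivity
  · simpa using bA_pos hμ 0

lemma bP_zero (μ : ℝ) : bP μ 0 = 1 / Real.Gamma (μ + 1) := by
  unfold bP
  rw [tsum_eq_single 0]
  · simp [bA]
  · intro k hk
    simp [hk]

lemma bP_hasDerivAt {μ : ℝ} (hμ : 0 ≤ μ) (z : ℝ) : HasDerivAt (bP μ) (bP (μ + 1) z) z := by
  have hR : z ∈ Metric.ball (0 : ℝ) (|z| + 1) := by simp
  have key : HasDerivAt (fun y => ∑' k : ℕ, bA μ k * y ^ k)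
      (∑' k : ℕ, bA μ k * ((k : ℝ) * z ^ (k - 1))) z := by
    refine hasDerivAt_tsum_of_isPreconnected (g := fun (k : ℕ) (y : ℝ) => bA μ k * y ^ k)
      (g' := fun (k : ℕ) (y : ℝ) => bA μ k * ((k : ℝ) * y ^ (k - 1)))
      (u := fun k : ℕ => bA μ k * ((k : ℝ) * (|z| + 1) ^ (k - 1)))
      (t := Metric.ball (0 : ℝ) (|z| + 1)) (y₀ := z) ?_ Metric.isOpen_ball
      (convex_ball _ _).isPreconnected ?_ ?_ hR (bA_summable hμ z) hR
    · rw [← summable_nat_add_iff 1]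
      refine (bA_summable (μ := μ + 1) (by positivity) (|z| + 1)).congr ?_
      intro k
      rw [← bA_succ]
      push_cast
      try simp only [Nat.add_sub_cancel]
      ring
    · intro k y _
      simpa using (hasDerivAt_pow k y).const_mul (bA μ k)
    · intro k y hy
      have hy' : |y| ≤ |z| + 1 := by
        have := mem_ball_zero_iff.1 hy
        rw [Real.norm_eq_abs] at this
        exact this.le
      have := bA_pos hμ k
      rw [norm_mul, norm_mul, norm_pow, Real.norm_eq_abs, Real.norm_eq_abs, Real.norm_eq_abs,
        abs_of_pos this, Nat.abs_cast]
      gcongr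
  have e : ∑' k : ℕ, bA μ k * ((k : ℝ) * z ^ (k - 1)) = bP (μ + 1) z := by
    unfold bP
    have hs : Summable fun k : ℕ => bA μ k * ((k : ℝ) * z ^ (k - 1)) := by
      rw [← summable_nat_add_iff 1]
      refine (bA_summable (μ := μ + 1) (by positivity) z).congr ?_
      intro k
      rw [← bA_succ]
      push_cast
      try simp only [Nat.add_sub_cancel]
      ring
    rw [hs.tsum_eq_zero_add]
    simp only [Nat.cast_zero, zero_mul, mul_zero, zero_add]
    refine tsum_congr fun k => ?_
    rw [← bA_succ]
    push_cast
    try simp only [Nat.add_sub_cancel]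
    ring
  rw [e] at key
  exact key

lemma bP_rec {μ : ℝ} (hμ : 0 ≤ μ) (z : ℝ) :
    bP μ z = (μ + 1) * bP (μ + 1) z + z * bP (μ + 2) z := by
  have s0 := bA_summable hμ z
  have s1 := bA_summable (μ := μ + 1) (by positivity) z
  have s2 := bA_summable (μ := μ + 2) (by positivity) z
  unfold bP
  rw [s0.tsum_eq_zero_add, s1.tsum_eq_zero_add, mul_add, add_assoc, ← tsum_mul_left, ← tsum_mul_left,
    ← Summable.tsum_add (((summable_nat_add_iff 1).2 s1).mul_left _) (s2.mul_left _)]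
  have gr : ∀ k : ℕ, bA μ k = (μ + 1 + k) * bA (μ + 1) k := by
    intro k
    unfold bA
    have hp : (0 : ℝ) < μ + k + 1 := by positivity
    have hg : 0 < Real.Gamma (μ + k + 1) := Real.Gamma_pos_of_pos hp
    have : Real.Gamma (μ + 1 + k + 1) = (μ + k + 1) * Real.Gamma (μ + k + 1) := by
      rw [← Real.Gamma_add_one hp.ne']
      congr 1
      ring
    rw [this]
    have hf : (0 : ℝ) < Nat.factorial k := by positivity
    field_simp
    ring
  congr 1
  · rw [gr 0]
    push_cast
    ring
  · refine tsum_congr fun k => ?_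
    rw [gr (k + 1), show μ + 2 = μ + 1 + 1 by ring, ← bA_succ (μ + 1) k]
    push_cast
    ring

lemma bp_hasDerivAt {μ : ℝ} (hμ : 0 ≤ μ) (x : ℝ) : HasDerivAt (bp μ) (x / 2 * bp (μ + 1) x) x := by
  have h1 : HasDerivAt (fun x : ℝ => x ^ 2 / 4) (x / 2) x := by
    have := (hasDerivAt_pow 2 x).div_const 4
    refine this.congr_deriv ?_
    push_cast
    ring
  have := (bP_hasDerivAt hμ (x ^ 2 / 4)).comp x h1
  rw [mul_comm] at this
  exact this

lemma bp_pos {μ : ℝ} (hμ : 0 ≤ μ) (x : ℝ) : 0 < bp μ x := bP_pos hμ (by positivity)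

lemma bp_rec {μ : ℝ} (hμ : 0 ≤ μ) (x : ℝ) :
    bp μ x = (μ + 1) * bp (μ + 1) x + x ^ 2 / 4 * bp (μ + 2) x := bP_rec hμ _

lemma bp_zero (μ : ℝ) : bp μ 0 = 1 / Real.Gamma (μ + 1) := by
  rw [bp, ← bP_zero]; norm_num

lemma bp_continuous {μ : ℝ} (hμ : 0 ≤ μ) : Continuous (bp μ) :=
  continuous_iff_continuousAt.2 fun x => (bp_hasDerivAt hμ x).continuousAt

lemma besselI_eq_s10 (μ : ℝ) {x : ℝ} (hx : 0 < x) : besselI μ x = (x / 2) ^ μ * bp μ x := by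
  unfold besselI bp bP
  rw [← tsum_mul_left]
  refine tsum_congr fun k => ?_
  rw [Real.rpow_add (by positivity), Real.rpow_mul (by positivity), Real.rpow_natCast]
  unfold bA
  rw [show (x / 2) ^ (2 : ℝ) = x ^ 2 / 4 by rw [Real.rpow_two]; ring]
  ring

/-- `p_ν` dominates: `t p_ν ≤ 2ν p_ν + t²/2 p_{ν+1}`. -/
lemma key_h {ν : ℝ} (hν : 1 / 2 ≤ ν) {t : ℝ} (ht : 0 ≤ t) :
    t * bp ν t ≤ 2 * ν * bp ν t + t ^ 2 / 2 * bp (ν + 1) t := by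
  have h0 : 0 ≤ ν := by linarith
  have hd : ∀ t, HasDerivAt
      (fun t => Real.exp t * (2 * ν * bp ν t + t ^ 2 / 2 * bp (ν + 1) t - t * bp ν t))
      (Real.exp t * ((2 * ν - 1) * bp ν t)) t := by
    intro t
    have d0 := bp_hasDerivAt h0 t
    have d1 := bp_hasDerivAt (μ := ν + 1) (by linarith) t
    have dsq : HasDerivAt (fun t : ℝ => t ^ 2 / 2) t t := by
      have := (hasDerivAt_pow 2 t).div_const 2
      refine this.congr_deriv ?_
      push_cast
      ring
    have := (Real.hasDerivAt_exp t).mul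
      (((d0.const_mul (2 * ν)).add (dsq.mul d1)).sub ((hasDerivAt_id t).mul d0))
    refine this.congr_deriv ?_
    have r := bp_rec h0 t
    simp only [id, Pi.add_apply, Pi.mul_apply, Pi.sub_apply]
    rw [show ν + 1 + 1 = ν + 2 by ring]
    linear_combination (-(Real.exp t * t)) * r
  have hm : MonotoneOn
      (fun t => Real.exp t * (2 * ν * bp ν t + t ^ 2 / 2 * bp (ν + 1) t - t * bp ν t)) (Ici 0) := by
    refine monotoneOn_of_deriv_nonneg (convex_Ici 0)
      (fun t _ => (hd t).continuousAt.continuousWithinAt)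
      (fun t _ => (hd t).differentiableAt.differentiableWithinAt) ?_
    intro t _
    rw [(hd t).deriv]
    have := bp_pos h0 t
    have : 0 ≤ 2 * ν - 1 := by linarith
    positivity
  have h := hm (mem_Ici.2 le_rfl) (mem_Ici.2 ht) ht
  have h2 := bp_pos h0 0
  try simp only [Real.exp_zero] at h
  have h3 : 0 ≤ Real.exp t * (2 * ν * bp ν t + t ^ 2 / 2 * bp (ν + 1) t - t * bp ν t) := by
    refine le_trans ?_ h
    have : 0 ≤ 2 * ν * bp ν 0 := by positivity
    linarith
  have h4 := nonneg_of_mul_nonneg_right h3 (Real.exp_pos t)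
  linarith

/-- comparison from derivatives on `(0,∞)`. -/
lemma le_of_deriv_cmp (f g f' g' : ℝ → ℝ) (hf : ContinuousOn f (Ici 0)) (hg : ContinuousOn g (Ici 0))
    (df : ∀ t, 0 < t → HasDerivAt f (f' t) t) (dg : ∀ t, 0 < t → HasDerivAt g (g' t) t)
    (h0 : f 0 ≤ g 0) (h : ∀ t, 0 < t → f' t ≤ g' t) {x : ℝ} (hx : 0 ≤ x) : f x ≤ g x := by
  have hm : MonotoneOn (fun t => g t - f t) (Ici 0) := by
    refine monotoneOn_of_deriv_nonneg (convex_Ici 0) (hg.sub hf) ?_ ?_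
    · rw [interior_Ici]
      exact fun t ht => ((dg t ht).sub (df t ht)).differentiableAt.differentiableWithinAt
    · rw [interior_Ici]
      intro t ht
      have := ((dg t ht).sub (df t ht)).deriv
      change deriv (g - f) t ≥ 0
      rw [this]
      linarith [h t ht]
  have := hm (mem_Ici.2 le_rfl) (mem_Ici.2 hx) hx
  try simp only at this
  linarith

lemma A_bound {β ν : ℝ} (hβ0 : -1 < β) (hβ1 : β < 0) (hν : 1 / 2 ≤ ν) {x : ℝ} (hx : 0 ≤ x) :
    ∫ t in (0 : ℝ)..x, Real.exp (β * t) * (t ^ (2 * ν) * bp ν t) ≤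
      Real.exp (β * x) / (1 + β) * ((ν + 1) / (2 * ν + 1) * (x ^ (2 * ν + 1) * bp (ν + 1) x)) := by
  have h0 : 0 ≤ ν := by linarith
  have hb : 0 < 1 + β := by linarith
  have d0 := bp_hasDerivAt h0
  have d1 := bp_hasDerivAt (μ := ν + 1) (by linarith)
  have cq : Continuous (fun t : ℝ => t ^ (2 * ν) * bp ν t) :=
    (Real.continuous_rpow_const (by linarith)).mul (bp_continuous h0)
  have ce : Continuous (fun t : ℝ => Real.exp (β * t) * (t ^ (2 * ν) * bp ν t)) := by fun_prop
  have dF : ∀ t, HasDerivAt (fun x => ∫ t in (0 : ℝ)..x, t ^ (2 * ν) * bp ν t)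
      (t ^ (2 * ν) * bp ν t) t := fun t => cq.integral_hasStrictDerivAt 0 t |>.hasDerivAt
  have dA : ∀ t, HasDerivAt (fun x => ∫ t in (0 : ℝ)..x, Real.exp (β * t) * (t ^ (2 * ν) * bp ν t))
      (Real.exp (β * t) * (t ^ (2 * ν) * bp ν t)) t :=
    fun t => ce.integral_hasStrictDerivAt 0 t |>.hasDerivAt
  have dE : ∀ t, HasDerivAt (fun t => Real.exp (β * t) / (1 + β))
      (Real.exp (β * t) * β / (1 + β)) t := by
    intro t
    have h := ((hasDerivAt_id t).const_mul β).exp.div_const (1 + β)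
    simpa using h
  have hFq : ∀ t : ℝ, 0 ≤ t → (∫ t in (0 : ℝ)..t, t ^ (2 * ν) * bp ν t) ≤ t ^ (2 * ν) * bp ν t := by
    intro x hx
    refine le_of_deriv_cmp (fun x => ∫ t in (0 : ℝ)..x, t ^ (2 * ν) * bp ν t)
      (fun t => t ^ (2 * ν) * bp ν t) (fun t => t ^ (2 * ν) * bp ν t)
      (fun t => 2 * ν * t ^ (2 * ν - 1) * bp ν t + t ^ (2 * ν) * (t / 2 * bp (ν + 1) t))
      (fun t _ => (dF t).continuousAt.continuousWithinAt) cq.continuousOn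
      (fun t _ => dF t) (fun t ht => (Real.hasDerivAt_rpow_const (Or.inl ht.ne')).mul (d0 t))
      ?_ ?_ hx
    · simp only [intervalIntegral.integral_same]
      have := bp_pos h0 0
      positivity
    · intro t ht
      have hk := key_h hν ht.le
      have e : t ^ (2 * ν) = t ^ (2 * ν - 1) * t := by
        rw [← Real.rpow_add_one ht.ne']
        congr 1
        ring
      have hp : 0 < t ^ (2 * ν - 1) := Real.rpow_pos_of_pos ht _
      try simp only
      rw [e]
      nlinarith [mul_le_mul_of_nonneg_left hk hp.le]
  have hFG : (∫ t in (0 : ℝ)..x, t ^ (2 * ν) * bp ν t) ≤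
      (ν + 1) / (2 * ν + 1) * (x ^ (2 * ν + 1) * bp (ν + 1) x) := by
    refine le_of_deriv_cmp (fun x => ∫ t in (0 : ℝ)..x, t ^ (2 * ν) * bp ν t)
      (fun x => (ν + 1) / (2 * ν + 1) * (x ^ (2 * ν + 1) * bp (ν + 1) x))
      (fun t => t ^ (2 * ν) * bp ν t)
      (fun t => (ν + 1) / (2 * ν + 1) * ((2 * ν + 1) * t ^ (2 * ν + 1 - 1) * bp (ν + 1) t +
        t ^ (2 * ν + 1) * (t / 2 * bp (ν + 1 + 1) t)))
      (fun t _ => (dF t).continuousAt.continuousWithinAt) ?_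
      (fun t _ => dF t)
      (fun t ht => ((Real.hasDerivAt_rpow_const (Or.inl ht.ne')).mul (d1 t)).const_mul _)
      ?_ ?_ hx
    · exact (continuous_const.mul ((Real.continuous_rpow_const (by linarith)).mul
        (bp_continuous (by linarith)))).continuousOn
    · simp [Real.zero_rpow (show 2 * ν + 1 ≠ 0 by positivity)]
    · intro t ht
      have hr := bp_rec h0 t
      have hp2 := bp_pos (μ := ν + 2) (by linarith) t
      try simp only
      rw [show 2 * ν + 1 - 1 = 2 * ν by ring, show ν + 1 + 1 = ν + 2 by ring,
        Real.rpow_add_one ht.ne', hr]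
      have hp : 0 < t ^ (2 * ν) := Real.rpow_pos_of_pos ht _
      have h21 : 0 < 2 * ν + 1 := by linarith
      have e : (ν + 1) / (2 * ν + 1) * ((2 * ν + 1) * t ^ (2 * ν) * bp (ν + 1) t +
        t ^ (2 * ν) * t * (t / 2 * bp (ν + 2) t)) - t ^ (2 * ν) * ((ν + 1) * bp (ν + 1) t + t ^ 2 / 4 * bp (ν + 2) t)
        = t ^ (2 * ν) * t ^ 2 * bp (ν + 2) t / (4 * (2 * ν + 1)) := by
        field_simp
        ring
      have : 0 ≤ t ^ (2 * ν) * t ^ 2 * bp (ν + 2) t / (4 * (2 * ν + 1)) := by positivity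
      linarith
  refine le_trans (b := Real.exp (β * x) / (1 + β) * ∫ t in (0 : ℝ)..x, t ^ (2 * ν) * bp ν t) ?_ ?_
  · refine le_of_deriv_cmp
      (fun x => ∫ t in (0 : ℝ)..x, Real.exp (β * t) * (t ^ (2 * ν) * bp ν t))
      (fun x => Real.exp (β * x) / (1 + β) * ∫ t in (0 : ℝ)..x, t ^ (2 * ν) * bp ν t)
      (fun t => Real.exp (β * t) * (t ^ (2 * ν) * bp ν t))
      (fun y => Real.exp (β * y) * β / (1 + β) * (∫ t in (0 : ℝ)..y, t ^ (2 * ν) * bp ν t) +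
        Real.exp (β * y) / (1 + β) * (y ^ (2 * ν) * bp ν y))
      (fun t _ => (dA t).continuousAt.continuousWithinAt)
      (fun t _ => ((dE t).mul (dF t)).continuousAt.continuousWithinAt)
      (fun t _ => dA t) (fun t _ => (dE t).mul (dF t)) ?_ ?_ hx
    · simp
    · intro t ht
      have hk := hFq t ht.le
      try simp only
      generalize (∫ t in (0 : ℝ)..t, t ^ (2 * ν) * bp ν t) = F at hk ⊢
      generalize t ^ (2 * ν) * bp ν t = q at hk ⊢
      have hE := Real.exp_pos (β * t)
      have e : Real.exp (β * t) * β / (1 + β) * F + Real.exp (β * t) / (1 + β) * q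
          - Real.exp (β * t) * q = Real.exp (β * t) / (1 + β) * ((-β) * (q - F)) := by
        field_simp
        ring
      have : 0 ≤ Real.exp (β * t) / (1 + β) * ((-β) * (q - F)) := by
        have h1 : 0 ≤ q - F := by linarith
        have h2 : 0 ≤ -β := by linarith
        positivity
      linarith
  · gcongr

/-- Integrand of `K`. -/
noncomputable def bE (α x t : ℝ) : ℝ := Real.exp (-x * Real.cosh t) * Real.cosh (α * t)

lemma bE_cont (α x : ℝ) : Continuous (bE α x) := by
  unfold bE
  fun_prop

lemma bE_pos (α x t : ℝ) : 0 < bE α x t := mul_pos (Real.exp_pos _) (Real.cosh_pos _)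

lemma cosh_mul_le (α : ℝ) {t : ℝ} (ht : 0 ≤ t) : Real.cosh (α * t) ≤ Real.exp (|α| * t) := by
  rw [← Real.cosh_abs, abs_mul, abs_of_nonneg ht, Real.cosh_eq]
  have : Real.exp (-(|α| * t)) ≤ Real.exp (|α| * t) := by
    apply Real.exp_le_exp.2
    have : 0 ≤ |α| * t := by positivity
    linarith
  linarith

lemma bE_int (α : ℝ) {x : ℝ} (hx : 0 < x) : IntegrableOn (bE α x) (Ioi 0) := by
  have hg : Integrable (fun t : ℝ => Real.exp (2 * α ^ 2 / x) * Real.exp (-(x / 8) * t ^ 2)) :=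
    (integrable_exp_neg_mul_sq (by positivity)).const_mul _
  refine Integrable.mono' hg.integrableOn (bE_cont α x).aestronglyMeasurable ?_
  refine (ae_restrict_iff' measurableSet_Ioi).2 (Eventually.of_forall fun t ht => ?_)
  have ht : 0 < t := ht
  rw [Real.norm_eq_abs, abs_of_pos (bE_pos _ _ _)]
  unfold bE
  have hc : t ^ 2 / 4 ≤ Real.cosh t := by
    rw [Real.cosh_eq]
    have := Real.quadratic_le_exp_of_nonneg ht.le
    have := Real.exp_pos (-t)
    linarith
  calc Real.exp (-x * Real.cosh t) * Real.cosh (α * t)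
      ≤ Real.exp (-x * Real.cosh t) * Real.exp (|α| * t) := by
        gcongr
        exact cosh_mul_le α ht.le
    _ = Real.exp (-x * Real.cosh t + |α| * t) := by rw [Real.exp_add]
    _ ≤ Real.exp (2 * α ^ 2 / x + -(x / 8) * t ^ 2) := by
        apply Real.exp_le_exp.2
        have h1 : x * (t ^ 2 / 4) ≤ x * Real.cosh t := by gcongr
        have h2 : 0 ≤ 2 * α ^ 2 / x + x / 8 * t ^ 2 - |α| * t := by
          have : 2 * α ^ 2 / x + x / 8 * t ^ 2 - |α| * t = (4 * |α| - x * t) ^ 2 / (8 * x) := by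
            rw [← sq_abs α]
            field_simp
            ring
          rw [this]
          positivity
        linarith
    _ = _ := by rw [Real.exp_add]

lemma besselK_eq (α x : ℝ) : besselK α x = ∫ t in Ioi (0 : ℝ), bE α x t := rfl

lemma besselK_pos (α : ℝ) {x : ℝ} (hx : 0 < x) : 0 < besselK α x := by
  rw [besselK_eq, setIntegral_pos_iff_support_of_nonneg_ae
    (Eventually.of_forall fun t => (bE_pos _ _ _).le) (bE_int α hx)]
  have : Function.support (bE α x) = univ := by
    ext t
    simp [(bE_pos α x t).ne']
  rw [this]
  simp

lemma cosh_mul_bE (α x t : ℝ) :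
    Real.cosh t * bE α x t = (bE (α + 1) x t + bE (α - 1) x t) / 2 := by
  unfold bE
  rw [show (α + 1) * t = α * t + t by ring, show (α - 1) * t = α * t - t by ring,
    Real.cosh_add, Real.cosh_sub]
  ring

lemma besselK_hasDerivAt (α : ℝ) {x : ℝ} (hx : 0 < x) :
    HasDerivAt (besselK α) (-(besselK (α + 1) x + besselK (α - 1) x) / 2) x := by
  have h := hasDerivAt_integral_of_dominated_loc_of_deriv_le
    (μ := volume.restrict (Ioi (0 : ℝ))) (F := fun x t => bE α x t)
    (F' := fun x t => -((bE (α + 1) x t + bE (α - 1) x t) / 2))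
    (bound := fun t => (bE (α + 1) (x / 2) t + bE (α - 1) (x / 2) t) / 2)
    (x₀ := x) (s := Ioi (x / 2)) (Ioi_mem_nhds (by linarith))
    (Eventually.of_forall fun y => (bE_cont α y).aestronglyMeasurable) (bE_int α hx)
    ?_ ?_ ?_ ?_
  · have e := h.2
    refine e.congr_deriv ?_
    rw [integral_neg, integral_div, integral_add (bE_int _ hx) (bE_int _ hx)]
    simp only [besselK_eq]
    ring
  · exact (((bE_cont _ _).add (bE_cont _ _)).div_const _).neg.aestronglyMeasurable
  · refine Eventually.of_forall fun t y hy => ?_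
    have hy : x / 2 < y := hy
    have hm : ∀ a, bE a y t ≤ bE a (x / 2) t := by
      intro a
      unfold bE
      have := Real.cosh_pos t
      have := Real.cosh_pos (a * t)
      gcongr
    rw [norm_neg, Real.norm_eq_abs, abs_of_pos]
    · linarith [hm (α + 1), hm (α - 1)]
    · linarith [bE_pos (α + 1) y t, bE_pos (α - 1) y t]
  · exact ((bE_int _ (by positivity)).add (bE_int _ (by positivity))).div_const 2
  · refine Eventually.of_forall fun t y hy => ?_
    rw [← cosh_mul_bE]
    unfold bE
    have := (((hasDerivAt_id y).neg.mul_const (Real.cosh t)).exp).mul_const (Real.cosh (α * t))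
    refine this.congr_deriv ?_
    simp
    ring

lemma besselK_rec (α : ℝ) {x : ℝ} (hx : 0 < x) :
    α * besselK α x = x / 2 * (besselK (α + 1) x - besselK (α - 1) x) := by
  have hd : ∀ t, HasDerivAt (fun t => Real.exp (-x * Real.cosh t) * Real.sinh (α * t))
      (α * bE α x t - x / 2 * (bE (α + 1) x t - bE (α - 1) x t)) t := by
    intro t
    have h1 := ((Real.hasDerivAt_cosh t).const_mul (-x)).exp
    have h2 := ((hasDerivAt_id t).const_mul α).sinh
    have := h1.mul h2
    refine this.congr_deriv ?_
    unfold bE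
    simp only [id]
    rw [show (α + 1) * t = α * t + t by ring, show (α - 1) * t = α * t - t by ring,
      Real.cosh_add, Real.cosh_sub]
    ring
  have hi : IntegrableOn
      (fun t => α * bE α x t - x / 2 * (bE (α + 1) x t - bE (α - 1) x t)) (Ioi 0) :=
    ((bE_int α hx).const_mul α).sub (((bE_int _ hx).sub (bE_int _ hx)).const_mul _)
  have hf : IntegrableOn (fun t => Real.exp (-x * Real.cosh t) * Real.sinh (α * t)) (Ioi 0) := by
    refine Integrable.mono' (bE_int α hx) ?_ (Eventually.of_forall fun t => ?_)
    · exact Continuous.aestronglyMeasurable (by fun_prop)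
    · unfold bE
      rw [norm_mul, Real.norm_eq_abs, Real.norm_eq_abs, Real.abs_exp]
      gcongr
      rw [abs_le]
      constructor
      · have := Real.cosh_add_sinh (α * t)
        linarith [Real.exp_pos (α * t)]
      · exact (Real.sinh_lt_cosh _).le
  have ht := tendsto_zero_of_hasDerivAt_of_integrableOn_Ioi (fun t _ => hd t) hi hf
  have := integral_Ioi_of_hasDerivAt_of_tendsto' (fun t _ => hd t) hi ht
  have hi2 : IntegrableOn (fun t => x / 2 * (bE (α + 1) x t - bE (α - 1) x t)) (Ioi 0) :=
    ((bE_int _ hx).sub (bE_int _ hx)).const_mul _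
  rw [integral_sub ((bE_int α hx).const_mul α) hi2,
    integral_const_mul, integral_const_mul, integral_sub (bE_int _ hx) (bE_int _ hx)] at this
  simp only [← besselK_eq] at this
  simp at this
  linarith

lemma besselK_upper {α : ℝ} (hα : 0 < α) {x : ℝ} (hx : 0 < x) :
    besselK α x ≤ (2 / x) ^ α * Real.Gamma α / 2 := by
  set g : ℝ → ℝ := fun t => Real.exp (α * t - x / 2 * Real.exp t) with hg
  have himg : Real.exp '' univ = Ioi 0 := by rw [image_univ, Real.range_exp]
  have hgeq : ∀ t, |Real.exp t| • ((Real.exp t) ^ (α - 1) * Real.exp (-(x / 2 * Real.exp t))) = g t := by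
    intro t
    rw [Real.abs_exp, smul_eq_mul, ← Real.exp_mul, ← Real.exp_add, ← Real.exp_add, hg]
    congr 1
    ring
  have hGi : IntegrableOn (fun u : ℝ => u ^ (α - 1) * Real.exp (-(x / 2 * u))) (Ioi 0) := by
    have := integrableOn_rpow_mul_exp_neg_mul_rpow (p := 1) (s := α - 1) (b := x / 2)
      (by linarith) one_pos (by positivity)
    simpa using this
  have hgint : Integrable g := by
    rw [← himg, integrableOn_image_iff_integrableOn_abs_deriv_smul MeasurableSet.univ
      (fun t _ => (Real.hasDerivAt_exp t).hasDerivWithinAt) Real.exp_injective.injOn] at hGi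
    simp only [hgeq] at hGi
    simpa using hGi
  have hgv : ∫ t, g t = (2 / x) ^ α * Real.Gamma α := by
    have h1 := Real.integral_rpow_mul_exp_neg_mul_Ioi hα (show 0 < x / 2 by positivity)
    rw [← himg, integral_image_eq_integral_abs_deriv_smul MeasurableSet.univ
      (fun t _ => (Real.hasDerivAt_exp t).hasDerivWithinAt) Real.exp_injective.injOn] at h1
    simp only [hgeq] at h1
    rw [one_div_div] at h1
    simpa using h1
  have hneg : IntegrableOn (fun t => g (-t)) (Ioi 0) := (hgint.comp_neg).integrableOn
  calc besselK α x ≤ ∫ t in Ioi (0 : ℝ), (g t + g (-t)) / 2 := by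
        rw [besselK_eq]
        refine setIntegral_mono (bE_int α hx) ((hgint.integrableOn.add hneg).div_const 2) ?_
        intro t
        simp only [bE, hg]
        rw [Real.cosh_eq (α * t), mul_div_assoc', mul_add, ← Real.exp_add, ← Real.exp_add]
        have h1 := mul_pos hx (Real.exp_pos t)
        have h2 := mul_pos hx (Real.exp_pos (-t))
        rw [Real.cosh_eq]
        gcongr
        · linarith
        · linarith
    _ = ((∫ t in Ioi (0 : ℝ), g t) + ∫ t in Iic (0 : ℝ), g t) / 2 := by
        rw [integral_div, integral_add hgint.integrableOn hneg, integral_comp_neg_Ioi]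
        simp
    _ = (∫ t, g t) / 2 := by
        rw [add_comm, intervalIntegral.integral_Iic_add_Ioi hgint.integrableOn hgint.integrableOn]
    _ = _ := by rw [hgv]

lemma besselK_deriv_up (α : ℝ) {x : ℝ} (hx : 0 < x) :
    HasDerivAt (besselK α) (α / x * besselK α x - besselK (α + 1) x) x := by
  refine (besselK_hasDerivAt α hx).congr_deriv ?_
  have := besselK_rec α hx
  rw [div_mul_eq_mul_div, this]
  field_simp
  ring

lemma besselK_deriv_down (α : ℝ) {x : ℝ} (hx : 0 < x) :
    HasDerivAt (besselK (α + 1)) (-besselK α x - (α + 1) / x * besselK (α + 1) x) x := by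
  refine (besselK_hasDerivAt (α + 1) hx).congr_deriv ?_
  have := besselK_rec (α + 1) hx
  rw [div_mul_eq_mul_div, this]
  rw [show α + 1 - 1 = α by ring]
  field_simp
  ring

/-- The Wronskian expression. -/
noncomputable def bW (μ x : ℝ) : ℝ :=
  x ^ (μ + 1) * (bp μ x * besselK (μ + 1) x + x / 2 * bp (μ + 1) x * besselK μ x)

lemma bW_deriv {μ : ℝ} (hμ : 0 ≤ μ) {x : ℝ} (hx : 0 < x) : HasDerivAt (bW μ) 0 x := by
  have d0 := bp_hasDerivAt hμ x
  have d1 := bp_hasDerivAt (μ := μ + 1) (by linarith) x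
  have k0 := besselK_deriv_up μ hx
  have k1 := besselK_deriv_down μ hx
  have dx : HasDerivAt (fun x : ℝ => x / 2) (1 / 2) x := (hasDerivAt_id x).div_const 2
  have dp : HasDerivAt (fun x : ℝ => x ^ (μ + 1)) ((μ + 1) * x ^ (μ + 1 - 1)) x :=
    Real.hasDerivAt_rpow_const (Or.inl hx.ne')
  refine (dp.mul ((d0.mul k1).add ((dx.mul d1).mul k0))).congr_deriv ?_
  have r := bp_rec hμ x
  simp only [Pi.add_apply, Pi.mul_apply]
  rw [show μ + 1 - 1 = μ by ring, show μ + 1 + 1 = μ + 2 by ring, Real.rpow_add_one hx.ne', r]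
  field_simp
  ring

lemma bW_const {μ : ℝ} (hμ : 0 ≤ μ) {x y : ℝ} (hx : 0 < x) (hy : 0 < y) : bW μ x = bW μ y := by
  refine (convex_Ioi (0 : ℝ)).is_const_of_fderivWithin_eq_zero (𝕜 := ℝ) (f := bW μ)
    (fun t ht => (bW_deriv hμ ht).differentiableAt.differentiableWithinAt) ?_ hx hy
  intro t ht
  rw [fderivWithin_of_isOpen isOpen_Ioi ht]
  have := (bW_deriv hμ ht).hasFDerivAt.fderiv
  rw [this]
  ext
  simp

lemma bW_le {μ : ℝ} (hμ : 0 < μ) {x : ℝ} (hx : 0 < x) : bW μ x ≤ 2 ^ μ := by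
  have hG : 0 < Real.Gamma (μ + 1) := Real.Gamma_pos_of_pos (by linarith)
  have hbd : ∀ s : ℝ, 0 < s → bW μ x ≤ bp μ s * (2 ^ μ * Real.Gamma (μ + 1)) +
      s ^ 2 / 4 * bp (μ + 1) s * (2 ^ μ * Real.Gamma μ) := by
    intro s hs
    rw [bW_const hμ.le hx hs, bW]
    have hp := Real.rpow_pos_of_pos hs (μ + 1)
    have p0 := bp_pos hμ.le s
    have p1 := bp_pos (μ := μ + 1) (by linarith) s
    have k1 := besselK_upper (α := μ + 1) (by linarith) hs
    have k0 := besselK_upper hμ hs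
    calc _ ≤ s ^ (μ + 1) * (bp μ s * ((2 / s) ^ (μ + 1) * Real.Gamma (μ + 1) / 2)
          + s / 2 * bp (μ + 1) s * ((2 / s) ^ μ * Real.Gamma μ / 2)) := by
          gcongr
      _ = _ := by
          rw [Real.div_rpow (by norm_num) hs.le, Real.div_rpow (by norm_num) hs.le,
            Real.rpow_add_one hs.ne', Real.rpow_add_one (by norm_num)]
          have : 0 < s ^ μ := Real.rpow_pos_of_pos hs _
          field_simp
          ring
  have hc : Continuous (fun s : ℝ => bp μ s * (2 ^ μ * Real.Gamma (μ + 1)) +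
      s ^ 2 / 4 * bp (μ + 1) s * (2 ^ μ * Real.Gamma μ)) := by
    have c0 := bp_continuous hμ.le
    have c1 := bp_continuous (μ := μ + 1) (by linarith)
    fun_prop
  have ht := (hc.tendsto 0).mono_left (nhdsWithin_le_nhds (s := Ioi (0 : ℝ)))
  have h := ge_of_tendsto ht (eventually_nhdsWithin_of_forall fun s hs => hbd s hs)
  refine h.trans_eq ?_
  rw [bp_zero]
  field_simp
  ring

lemma bIK_lt {μ : ℝ} (hμ : 0 < μ) {x : ℝ} (hx : 0 < x) :
    x ^ (μ + 1) * (bp μ x * besselK (μ + 1) x) < 2 ^ μ := by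
  have h := bW_le hμ hx
  unfold bW at h
  have h1 := bp_pos (μ := μ + 1) (by linarith) x
  have h2 := besselK_pos μ hx
  have h3 := Real.rpow_pos_of_pos hx (μ + 1)
  have : 0 < x ^ (μ + 1) * (x / 2 * bp (μ + 1) x * besselK μ x) := by positivity
  linarith

theorem stmt_10 (β ν : ℝ) (hβ0 : -1 < β) (hβ1 : β < 0) (hν : 1/2 ≤ ν) (x : ℝ) (hx : 0 < x) :
    (Real.exp (-β * x) * besselK (ν + 2) x / x ^ (ν - 1)) *
        ∫ t in (0 : ℝ)..x, Real.exp (β * t) * t ^ ν * besselI ν t <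
      2 * (ν + 1) / ((2 * ν + 1) * (1 + β)) := by

  have h0 : 0 < ν := by linarith
  have hb : 0 < 1 + β := by linarith
  have hint : ∫ t in (0 : ℝ)..x, Real.exp (β * t) * t ^ ν * besselI ν t =
      (2 ^ ν)⁻¹ * ∫ t in (0 : ℝ)..x, Real.exp (β * t) * (t ^ (2 * ν) * bp ν t) := by
    rw [← intervalIntegral.integral_const_mul]
    refine intervalIntegral.integral_congr fun t ht => ?_
    rw [uIcc_of_le hx.le] at ht
    rcases ht.1.eq_or_lt with h | h
    · subst h
      simp [Real.zero_rpow h0.ne', Real.zero_rpow (show 2 * ν ≠ 0 by positivity)]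
    · rw [besselI_eq_s10 ν h, Real.div_rpow h.le (by norm_num), two_mul, Real.rpow_add h]
      ring
  rw [hint]
  have hA := A_bound hβ0 hβ1 hν hx.le
  have hK := besselK_pos (ν + 2) hx
  have hIK := bIK_lt (μ := ν + 1) (by linarith) hx
  rw [show ν + 1 + 1 = ν + 2 by ring] at hIK
  have hp1 : 0 < x ^ (ν - 1) := Real.rpow_pos_of_pos hx _
  have h2 : (0 : ℝ) < 2 ^ ν := by positivity
  have e1 : x ^ (2 * ν + 1) = x ^ (ν - 1) * x ^ (ν + 2) := by
    rw [← Real.rpow_add hx]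
    congr 1
    ring
  have e2 : Real.exp (-β * x) * Real.exp (β * x) = 1 := by
    rw [← Real.exp_add]
    simp
  have e3 : (2 : ℝ) ^ (ν + 1) = 2 ^ ν * 2 := Real.rpow_add_one (by norm_num) _
  calc _ ≤ Real.exp (-β * x) * besselK (ν + 2) x / x ^ (ν - 1) * ((2 ^ ν)⁻¹ *
        (Real.exp (β * x) / (1 + β) *
          ((ν + 1) / (2 * ν + 1) * (x ^ (2 * ν + 1) * bp (ν + 1) x)))) := by
        gcongr
    _ = (Real.exp (-β * x) * Real.exp (β * x)) *
        ((ν + 1) / ((2 * ν + 1) * (1 + β) * 2 ^ ν)) *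
          (x ^ (ν + 2) * (bp (ν + 1) x * besselK (ν + 2) x)) := by
        rw [e1]
        field_simp
    _ = (ν + 1) / ((2 * ν + 1) * (1 + β) * 2 ^ ν) *
          (x ^ (ν + 2) * (bp (ν + 1) x * besselK (ν + 2) x)) := by
        rw [e2, one_mul]
    _ < (ν + 1) / ((2 * ν + 1) * (1 + β) * 2 ^ ν) * 2 ^ (ν + 1) := by
        gcongr
    _ = _ := by
        rw [e3]
        field_simp
end
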